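/- (Proposition 8, strong-interference achievability gap with a discrete input.) Let 1 ≤ snr ≤ snr0 and β ∈ (0,1]. Set c₂ := 3/( 2·log( 12·(1+β·snr0)/β ) ), N := ⌊ √(1 + c₂·snr) ⌋, and let X_D ~ PAM(N). Then X_D satisfies the MMSE constraint mmse(X_D, snr0) ≤ β/(1+β·snr0), and its mutual information obeys ½·log(1+snr) − I(X_D, snr) ≤ ½·log( 1 + (2/3)·log( 12·(1+β·snr0)/β ) ) + ½·log(4πe/6). -/

import Mathlib

open MeasureTheory ProbabilityTheory Real
open scoped ENNReal

noncomputable section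

/-- The scalar observation `Y_snr(V) = √snr · V + Z`. -/
def obsS {Ω : Type*} (V Z : Ω → ℝ) (snr : ℝ) : Ω → ℝ :=
  fun ω => Real.sqrt snr * V ω + Z ω

/-- The σ-algebra generated by the observation `Y_snr(V)`. -/
def obsSigmaS {Ω : Type*} [MeasurableSpace Ω] (V Z : Ω → ℝ) (snr : ℝ) : MeasurableSpace Ω :=
  MeasurableSpace.comap (obsS V Z snr) inferInstance

/-- `mmse(V, snr) = E[(V − E[V | Y_snr(V)])²]`. -/
def mmseS {Ω : Type*} [MeasurableSpace Ω] (μ : Measure Ω) (V Z : Ω → ℝ) (snr : ℝ) : ℝ :=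
  ∫ ω, (V ω - (μ[V | obsSigmaS V Z snr]) ω) ^ 2 ∂μ

/-- Kullback-Leibler divergence (in nats), as the integral of the log Radon-Nikodym
derivative. -/
def klDivR {α : Type*} [MeasurableSpace α] (μ ν : Measure α) : ℝ :=
  ∫ x, Real.log (μ.rnDeriv ν x).toReal ∂μ

/-- `I(V, snr)`: the mutual information (in nats) between `V` and `Y_snr(V)`, namely the KL
divergence between the joint law of `(V, Y_snr(V))` and the product of its marginals. -/
def miS {Ω : Type*} [MeasurableSpace Ω] (μ : Measure Ω) (V Z : Ω → ℝ) (snr : ℝ) : ℝ :=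
  klDivR (Measure.map (fun ω => (V ω, obsS V Z snr ω)) μ)
    ((Measure.map V μ).prod (Measure.map (obsS V Z snr) μ))

/-- The mixed input `X_mix = √(1−δ)·X_D + √δ·X_G`. -/
def mixedInput {Ω : Type*} (δ : ℝ) (XD XG : Ω → ℝ) : Ω → ℝ :=
  fun ω => Real.sqrt (1 - δ) * XD ω + Real.sqrt δ * XG ω

/-- The `k`-th point of the unit-power `PAM(N)` constellation: `N` equally spaced points,
symmetric about `0`, with `E[X²] = 1` (minimum distance `d` with `d² = 12/(N²−1)`;
for `N = 1` the single point is `0`). -/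
def pamPoint (N : ℕ) (k : Fin N) : ℝ :=
  Real.sqrt (12 / ((N : ℝ) ^ 2 - 1)) * ((k : ℝ) - ((N : ℝ) - 1) / 2)

/-- The law of a `PAM(N)` input: uniform over the `N` constellation points. -/
def pamLaw (N : ℕ) : Measure ℝ :=
  ((N : ℝ≥0∞))⁻¹ • ∑ k : Fin N, Measure.dirac (pamPoint N k)

/-- `C_∞(snr, snr0, β) = ½·log⁺((1+β·snr)/(1+β·snr0)) + ½·log(1+min(snr, snr0))`. -/
def Cinf (snr snr0 β : ℝ) : ℝ :=
  (1 / 2) * max (Real.log ((1 + β * snr) / (1 + β * snr0))) 0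
    + (1 / 2) * Real.log (1 + min snr snr0)

/-!
Mutual information is bounded below in the manner of Ozarow and Wyner. Let `W` be the error of the
linear MMSE estimate of the input from the output and `d` the minimum distance of the constellation.
In the Donsker–Varadhan inequality, take as test density in the input variable a Gaussian centred
at the estimate with variance `E[W²] + d²/12`. By Jensen its value at a constellation point is at
most a constant times its average over the interval of length `d` around that point. These intervals
are disjoint, so the total mass is controlled.

The MMSE is at most the error of the posterior mean, which by Jensen and AM–GM is at most a sum of
pairwise squared distances weighted by the Bhattacharyya overlaps `exp (-snr0 * (x - x')² / 8)`. The
number of points is chosen so that the overlap of nearest neighbours is at most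
`β / (12 * (1 + β * snr0))`, and the sum is then dominated by a geometric series.
-/

open scoped NNReal

section KullbackLeibler

variable {α : Type*} [MeasurableSpace α] {P Q : Measure α}

lemma integrable_llr_of_le_smul [IsFiniteMeasure P] [IsFiniteMeasure Q] {c : ℝ≥0∞} (hc : c ≠ ∞)
    (hPQ : P ≤ c • Q) : Integrable (llr P Q) P := by
  rw [← integrable_rnDeriv_mul_log_iff (Measure.absolutelyContinuous_of_le_smul hPQ)]
  have hle : ∀ᵐ x ∂Q, P.rnDeriv Q x ≤ c := by
    refine ae_le_of_forall_setLIntegral_le_of_sigmaFinite (Measure.measurable_rnDeriv P Q)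
      fun s _ _ => ?_
    calc ∫⁻ x in s, P.rnDeriv Q x ∂Q ≤ P s := Measure.setLIntegral_rnDeriv_le s
      _ ≤ (c • Q) s := hPQ s
      _ = ∫⁻ _ in s, c ∂Q := by simp
  obtain ⟨C, hC⟩ := (isCompact_Icc (a := (0 : ℝ)) (b := c.toReal)).exists_bound_of_continuousOn
    continuous_mul_log.continuousOn
  refine Integrable.of_bound (C := C) (continuous_mul_log.measurable.comp
    (Measure.measurable_rnDeriv P Q).ennreal_toReal).aestronglyMeasurable ?_
  filter_upwards [hle] with x hx
  exact hC _ ⟨ENNReal.toReal_nonneg, ENNReal.toReal_mono hc hx⟩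

lemma donsker_varadhan_le_klDivR [IsProbabilityMeasure P] [IsProbabilityMeasure Q]
    (hPQ : P ≪ Q) (hllr : Integrable (llr P Q) P) {f : α → ℝ} (hfP : Integrable f P)
    (hfQ : Integrable (fun x => exp (f x)) Q) :
    ∫ x, f x ∂P - log (∫ x, exp (f x) ∂Q) ≤ klDivR P Q := by
  have : IsProbabilityMeasure (Q.tilted f) := isProbabilityMeasure_tilted hfQ
  have htilt := integral_llr_tilted_right hPQ hfP hfQ hllr
  have hgibbs := InformationTheory.integral_llr_add_sub_measure_univ_nonneg
    (hPQ.trans (absolutelyContinuous_tilted hfQ)) (integrable_llr_tilted_right hPQ hfP hllr hfQ)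
  have hkl : klDivR P Q = ∫ x, llr P Q x ∂P := rfl
  simp only [probReal_univ] at hgibbs
  linarith

lemma integral_log_le_klDivR [IsProbabilityMeasure P] [IsProbabilityMeasure Q]
    (hPQ : P ≪ Q) (hllr : Integrable (llr P Q) P) {h : α → ℝ} (hpos : ∀ x, 0 < h x)
    (hlog : Integrable (fun x => log (h x)) P) (hint : Integrable h Q) (hle : ∫ x, h x ∂Q ≤ 1) :
    ∫ x, log (h x) ∂P ≤ klDivR P Q := by
  have hexp : (fun x => exp (log (h x))) = h := funext fun x => exp_log (hpos x)
  have hdv := donsker_varadhan_le_klDivR hPQ hllr hlog (by rwa [hexp])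
  rw [hexp] at hdv
  linarith [log_nonpos (integral_nonneg fun x => (hpos x).le) hle]

end KullbackLeibler

section LeastSquares

variable {Ω : Type*} {m m0 : MeasurableSpace Ω} {μ : Measure Ω} [IsFiniteMeasure μ] {X g : Ω → ℝ}

lemma integral_sq_sub_condExp_le (hm : m ≤ m0) (hX : MemLp X 2 μ) (hg : MemLp g 2 μ)
    (hgm : StronglyMeasurable[m] g) :
    ∫ ω, (X ω - (μ[X | m]) ω) ^ 2 ∂μ ≤ ∫ ω, (X ω - g ω) ^ 2 ∂μ := by
  have hcondExp : μ[X - g | m] =ᵐ[μ] μ[X | m] - g := by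
    have h := condExp_sub (hX.integrable one_le_two) (hg.integrable one_le_two) m
    rwa [condExp_of_stronglyMeasurable hm hgm (hg.integrable one_le_two)] at h
  calc ∫ ω, (X ω - (μ[X | m]) ω) ^ 2 ∂μ
      = ∫ ω, ((X - g) ω - (μ[X - g | m]) ω) ^ 2 ∂μ := by
        refine integral_congr_ae ?_
        filter_upwards [hcondExp] with ω hω
        simp [hω]
    _ = ∫ ω, (Var[X - g; μ | m]) ω ∂μ := (integral_condExp hm).symm
    _ ≤ ∫ ω, (μ[(X - g) ^ 2 | m]) ω ∂μ :=
        integral_mono_ae integrable_condVar integrable_condExp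
          (condVar_ae_le_condExp_sq hm (hX.sub hg))
    _ = ∫ ω, (X ω - g ω) ^ 2 ∂μ := integral_condExp hm

end LeastSquares

section UniformLaw

/-- The law of a uniformly chosen point of the family `p`, counted with multiplicity when `p` is
not injective. -/
def uniformLaw {ι α : Type*} [Fintype ι] [MeasurableSpace α] (p : ι → α) : Measure α :=
  (Fintype.card ι : ℝ≥0∞)⁻¹ • ∑ i, Measure.dirac (p i)

variable {ι α : Type*} [Fintype ι] [MeasurableSpace α] [MeasurableSingletonClass α] (p : ι → α)

lemma lintegral_uniformLaw (f : α → ℝ≥0∞) :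
    ∫⁻ x, f x ∂uniformLaw p = (Fintype.card ι : ℝ≥0∞)⁻¹ * ∑ i, f (p i) := by
  simp [uniformLaw, lintegral_smul_measure]

lemma integrable_uniformLaw [Nonempty ι] (f : α → ℝ) : Integrable f (uniformLaw p) :=
  (integrable_finsetSum_measure.2 fun _ _ => integrable_dirac (by simp)).smul_measure (by simp)

lemma integral_uniformLaw (f : α → ℝ) :
    ∫ x, f x ∂uniformLaw p = (Fintype.card ι : ℝ)⁻¹ * ∑ i, f (p i) := by
  rw [uniformLaw, integral_smul_measure,
    integral_finsetSum_measure fun _ _ => integrable_dirac (by simp)]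
  simp

lemma ae_mem_range_uniformLaw : ∀ᵐ x ∂uniformLaw p, x ∈ Set.range p := by
  refine Measure.ae_smul_measure ?_ _
  simp [ae_iff, Measure.finsetSum_apply]

end UniformLaw

section UniformRandomVariable

variable {Ω ι : Type*} [MeasurableSpace Ω] [Fintype ι] [Nonempty ι] {μ : Measure Ω}

lemma map_prodMk_le_smul_prod {α γ : Type*} [MeasurableSpace α] [MeasurableSingletonClass α]
    [MeasurableSpace γ] [IsProbabilityMeasure μ] {p : ι → α} {X : Ω → α} {Y : Ω → γ}
    (hX : HasLaw X (uniformLaw p) μ) (hY : AEMeasurable Y μ) :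
    μ.map (fun ω => (X ω, Y ω)) ≤ (Fintype.card ι : ℝ≥0∞) • (μ.map X).prod (μ.map Y) := by
  have : IsProbabilityMeasure (μ.map Y) := Measure.isProbabilityMeasure_map hY
  have hrange : ∀ᵐ ω ∂μ, X ω ∈ Set.range p :=
    ae_of_ae_map hX.aemeasurable (hX.map_eq ▸ ae_mem_range_uniformLaw p)
  refine Measure.le_iff.2 fun S hS => ?_
  calc μ.map (fun ω => (X ω, Y ω)) S
      = μ ((fun ω => (X ω, Y ω)) ⁻¹' S) :=
        Measure.map_apply_of_aemeasurable (hX.aemeasurable.prodMk hY) hS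
    _ ≤ μ (⋃ i, Y ⁻¹' (Prod.mk (p i) ⁻¹' S)) := by
        refine measure_mono_ae ?_
        filter_upwards [hrange] with ω ⟨i, hi⟩ hω
        refine Set.mem_iUnion.2 ⟨i, ?_⟩
        change (p i, Y ω) ∈ S
        rwa [hi]
    _ ≤ ∑ i, μ (Y ⁻¹' (Prod.mk (p i) ⁻¹' S)) := measure_iUnion_fintype_le _ _
    _ = ∑ i, μ.map Y (Prod.mk (p i) ⁻¹' S) := Finset.sum_congr rfl fun i _ =>
        (Measure.map_apply_of_aemeasurable hY (measurable_prodMk_left hS)).symm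
    _ = ((Fintype.card ι : ℝ≥0∞) • (μ.map X).prod (μ.map Y)) S := by
        rw [Measure.smul_apply, Measure.prod_apply hS, hX.map_eq, lintegral_uniformLaw,
          smul_eq_mul, ENNReal.mul_inv_cancel_left (by simp) (by simp)]

lemma memLp_two_of_hasLaw_uniformLaw {p : ι → ℝ} {X : Ω → ℝ} (hX : HasLaw X (uniformLaw p) μ) :
    MemLp X 2 μ := by
  have h : Integrable (fun x : ℝ => x ^ 2) (μ.map X) := hX.map_eq ▸ integrable_uniformLaw p _
  exact (memLp_two_iff_integrable_sq hX.aemeasurable.aestronglyMeasurable).2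
    (h.comp_aemeasurable hX.aemeasurable)

end UniformRandomVariable

section GaussianPacking

lemma log_gaussianPDFReal (c : ℝ) {v : ℝ≥0} (hv : v ≠ 0) (x : ℝ) :
    log (gaussianPDFReal c v x) = -log (2 * π * v) / 2 - (x - c) ^ 2 / (2 * v) := by
  have : (0 : ℝ) < 2 * π * v := by positivity
  rw [gaussianPDFReal, log_mul (by positivity) (exp_ne_zero _), log_inv, log_sqrt this.le, log_exp]
  ring

lemma gaussianPDFReal_le_inv_sqrt (c : ℝ) (v : ℝ≥0) (x : ℝ) :
    gaussianPDFReal c v x ≤ (√(2 * π * v))⁻¹ := by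
  refine mul_le_of_le_one_right (by positivity) (exp_le_one_iff.2 ?_)
  exact div_nonpos_of_nonpos_of_nonneg (neg_nonpos.2 (sq_nonneg _)) (by positivity)

lemma mul_exp_le_intervalIntegral_exp {a b : ℝ} (hab : a < b) {f : ℝ → ℝ} (hf : Continuous f) :
    (b - a) * exp ((b - a)⁻¹ * ∫ u in a..b, f u) ≤ ∫ u in a..b, exp (f u) := by
  have hjensen : exp (⨍ u in a..b, f u) ≤ ⨍ u in a..b, exp (f u) := by
    rw [Set.uIoc_of_le hab.le]
    refine convexOn_exp.map_set_average_le continuous_exp.continuousOn isClosed_univ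
      (by simp [hab]) (by simp) (by simp) ?_ ?_
    · exact hf.integrableOn_Ioc
    · exact (continuous_exp.comp hf).integrableOn_Ioc
  rwa [interval_average_eq, interval_average_eq, smul_eq_mul, smul_eq_mul,
    le_inv_mul_iff₀ (sub_pos.2 hab)] at hjensen

lemma mul_gaussianPDFReal_le_intervalIntegral (c : ℝ) (v : ℝ≥0) (x : ℝ) {d : ℝ} (hd : 0 < d) :
    d * exp (-(d ^ 2 / (24 * v))) * gaussianPDFReal c v x ≤
      ∫ u in (x - d / 2)..(x + d / 2), gaussianPDFReal c v u := by
  have hquad : ∫ u in (x - d / 2)..(x + d / 2), -(u - c) ^ 2 / (2 * (v : ℝ)) =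
      d * (-(x - c) ^ 2 / (2 * v) - d ^ 2 / (24 * v)) := by
    rw [intervalIntegral.integral_div, intervalIntegral.integral_neg,
      intervalIntegral.integral_comp_sub_right (fun u => u ^ 2) c, integral_pow]
    ring
  have hjensen := mul_exp_le_intervalIntegral_exp (a := x - d / 2) (b := x + d / 2) (by linarith)
    (f := fun u => -(u - c) ^ 2 / (2 * (v : ℝ))) (by fun_prop)
  rw [hquad, show x + d / 2 - (x - d / 2) = d by ring, inv_mul_cancel_left₀ hd.ne'] at hjensen
  simp only [gaussianPDFReal_def, intervalIntegral.integral_const_mul]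
  calc d * exp (-(d ^ 2 / (24 * v))) * ((√(2 * π * v))⁻¹ * exp (-(x - c) ^ 2 / (2 * v)))
      = (√(2 * π * v))⁻¹ * (d * exp (-(x - c) ^ 2 / (2 * v) - d ^ 2 / (24 * v))) := by
        rw [sub_eq_add_neg _ (d ^ 2 / _), exp_add]
        ring
    _ ≤ _ := mul_le_mul_of_nonneg_left hjensen (by positivity)

lemma pairwise_disjoint_Ioc_of_separated {ι : Type*} {p : ι → ℝ} {d : ℝ}
    (hp : Pairwise fun i j => d ≤ |p i - p j|) :
    Pairwise fun i j =>
      Disjoint (Set.Ioc (p i - d / 2) (p i + d / 2)) (Set.Ioc (p j - d / 2) (p j + d / 2)) := by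
  refine fun i j hij => Set.disjoint_left.2 fun u hi hj => (hp hij).not_gt (abs_lt.2 ⟨?_, ?_⟩) <;>
    linarith [hi.1, hi.2, hj.1, hj.2]

lemma sum_mul_gaussianPDFReal_le_one {ι : Type*} [Fintype ι] {p : ι → ℝ} {d : ℝ} (hd : 0 < d)
    (hp : Pairwise fun i j => d ≤ |p i - p j|) (c : ℝ) {v : ℝ≥0} (hv : v ≠ 0) :
    ∑ i, d * exp (-(d ^ 2 / (24 * v))) * gaussianPDFReal c v (p i) ≤ 1 := by
  have hint := integrable_gaussianPDFReal c v
  calc ∑ i, d * exp (-(d ^ 2 / (24 * v))) * gaussianPDFReal c v (p i)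
      ≤ ∑ i, ∫ u in Set.Ioc (p i - d / 2) (p i + d / 2), gaussianPDFReal c v u :=
        Finset.sum_le_sum fun i _ => by
          rw [← intervalIntegral.integral_of_le (by linarith)]
          exact mul_gaussianPDFReal_le_intervalIntegral c v (p i) hd
    _ = ∫ u in ⋃ i, Set.Ioc (p i - d / 2) (p i + d / 2), gaussianPDFReal c v u :=
        (integral_iUnion_fintype (fun _ => measurableSet_Ioc)
          (pairwise_disjoint_Ioc_of_separated hp) fun _ => hint.integrableOn).symm
    _ ≤ ∫ u, gaussianPDFReal c v u :=
        setIntegral_le_integral hint (ae_of_all _ fun u => gaussianPDFReal_nonneg c v u)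
    _ = 1 := integral_gaussianPDFReal_eq_one c hv

lemma integral_uniformLaw_gaussianPDFReal_le_one {ι : Type*} [Fintype ι] [Nonempty ι] {p : ι → ℝ}
    {d : ℝ} (hd : 0 < d) (hp : Pairwise fun i j => d ≤ |p i - p j|) (c : ℝ) {v : ℝ≥0}
    (hv : v ≠ 0) :
    ∫ x, Fintype.card ι * (d * exp (-(d ^ 2 / (24 * v)))) * gaussianPDFReal c v x ∂uniformLaw p
      ≤ 1 := by
  rw [integral_uniformLaw]
  simp only [mul_assoc (Fintype.card ι : ℝ)]
  rw [← Finset.mul_sum, inv_mul_cancel_left₀ (by simp)]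
  exact sum_mul_gaussianPDFReal_le_one hd hp c hv

end GaussianPacking

section OzarowWyner

variable {γ : Type*} [MeasurableSpace γ] {g : γ → ℝ}

lemma log_sub_integral_sq_sub_le_klDivR {P : Measure (ℝ × γ)} {Q : Measure ℝ} {ν : Measure γ}
    [IsProbabilityMeasure P] [IsProbabilityMeasure Q] [IsProbabilityMeasure ν] {C : ℝ≥0∞}
    (hC : C ≠ ∞) (hdom : P ≤ C • Q.prod ν) (hg : Measurable g)
    (hsq : Integrable (fun z : ℝ × γ => (z.1 - g z.2) ^ 2) P) {v : ℝ≥0} (hv : v ≠ 0) {K : ℝ}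
    (hK : 0 < K) (hmass : ∀ c, ∫ x, K * gaussianPDFReal c v x ∂Q ≤ 1) :
    log K - log (2 * π * v) / 2 - (∫ z, (z.1 - g z.2) ^ 2 ∂P) / (2 * v) ≤
      klDivR P (Q.prod ν) := by
  set h : ℝ × γ → ℝ := fun z => K * gaussianPDFReal (g z.2) v z.1
  have hlog : (fun z => log (h z)) =
      fun z => log K - log (2 * π * v) / 2 - (z.1 - g z.2) ^ 2 / (2 * v) := by
    funext z
    rw [log_mul hK.ne' (gaussianPDFReal_pos _ _ _ hv).ne', log_gaussianPDFReal _ hv]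
    ring
  have hint : Integrable h (Q.prod ν) := by
    refine .of_bound (C := K * (√(2 * π * v))⁻¹) (by fun_prop) (ae_of_all _ fun z => ?_)
    rw [norm_of_nonneg (mul_nonneg hK.le (gaussianPDFReal_nonneg _ _ _))]
    exact mul_le_mul_of_nonneg_left (gaussianPDFReal_le_inv_sqrt _ _ _) hK.le
  have hle : ∫ z, h z ∂(Q.prod ν) ≤ 1 := by
    rw [integral_prod_symm _ hint]
    calc ∫ y, (∫ x, h (x, y) ∂Q) ∂ν ≤ ∫ _, (1 : ℝ) ∂ν :=
          integral_mono hint.integral_prod_right (integrable_const _) fun y => hmass (g y)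
      _ = 1 := by simp
  have hquad := hsq.div_const (2 * (v : ℝ))
  have hkl := integral_log_le_klDivR (Measure.absolutelyContinuous_of_le_smul hdom)
    (integrable_llr_of_le_smul hC hdom) (fun z => mul_pos hK (gaussianPDFReal_pos _ _ _ hv))
    (hlog ▸ (integrable_const _).sub hquad) hint hle
  rw [hlog, integral_sub (integrable_const _) hquad, integral_div] at hkl
  simpa using hkl

variable {Ω ι : Type*} [MeasurableSpace Ω] [Fintype ι] [Nonempty ι] {μ : Measure Ω}
  [IsProbabilityMeasure μ] {p : ι → ℝ} {d : ℝ} {X : Ω → ℝ} {Y : Ω → γ}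

lemma log_card_add_log_sub_le_klDivR (hd : 0 < d) (hp : Pairwise fun i j => d ≤ |p i - p j|)
    (hX : HasLaw X (uniformLaw p) μ) (hY : AEMeasurable Y μ) (hg : Measurable g)
    (hXg : Integrable (fun ω => (X ω - g (Y ω)) ^ 2) μ) {v : ℝ≥0} (hv : v ≠ 0) :
    log (Fintype.card ι) + log d - log (2 * π * v) / 2 -
        (∫ ω, (X ω - g (Y ω)) ^ 2 ∂μ + d ^ 2 / 12) / (2 * v) ≤
      klDivR (μ.map fun ω => (X ω, Y ω)) ((μ.map X).prod (μ.map Y)) := by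
  have hXY := hX.aemeasurable.prodMk hY
  have := Measure.isProbabilityMeasure_map hX.aemeasurable
  have := Measure.isProbabilityMeasure_map hY
  have := Measure.isProbabilityMeasure_map hXY
  have hmeas : Measurable fun z : ℝ × γ => (z.1 - g z.2) ^ 2 := by fun_prop
  have hkl := log_sub_integral_sq_sub_le_klDivR (by simp) (map_prodMk_le_smul_prod hX hY) hg
    ((integrable_map_measure hmeas.aestronglyMeasurable hXY).2 hXg) hv
    (K := Fintype.card ι * (d * exp (-(d ^ 2 / (24 * v))))) (by positivity)
    fun c => by
      rw [hX.map_eq]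
      exact integral_uniformLaw_gaussianPDFReal_le_one hd hp c hv
  rw [integral_map hXY hmeas.aestronglyMeasurable, log_mul (by simp) (by positivity),
    log_mul hd.ne' (exp_ne_zero _), log_exp] at hkl
  calc _ = _ := by ring
    _ ≤ _ := hkl

lemma ozarow_wyner_le_klDivR (hd : 0 < d) (hp : Pairwise fun i j => d ≤ |p i - p j|)
    (hX : HasLaw X (uniformLaw p) μ) (hY : AEMeasurable Y μ) (hg : Measurable g)
    (hXg : Integrable (fun ω => (X ω - g (Y ω)) ^ 2) μ) :
    log (Fintype.card ι) - 1 / 2 * log (1 + 12 * (∫ ω, (X ω - g (Y ω)) ^ 2 ∂μ) / d ^ 2) -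
        1 / 2 * log (π * exp 1 / 6) ≤
      klDivR (μ.map fun ω => (X ω, Y ω)) ((μ.map X).prod (μ.map Y)) := by
  set E : ℝ := ∫ ω, (X ω - g (Y ω)) ^ 2 ∂μ with hE
  have hE0 : 0 ≤ E := integral_nonneg fun _ => sq_nonneg _
  have hvpos : 0 < E + d ^ 2 / 12 := by positivity
  have hkl := log_card_add_log_sub_le_klDivR hd hp hX hY hg hXg
    (v := (E + d ^ 2 / 12).toNNReal) (by simpa using hvpos)
  rw [coe_toNNReal _ hvpos.le, ← hE,
    show 2 * π * (E + d ^ 2 / 12) = d ^ 2 * (1 + 12 * E / d ^ 2) * (π / 6) by field_simp; ring,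
    log_mul (by positivity) (by positivity), log_mul (by positivity) (by positivity), log_pow,
    show (E + d ^ 2 / 12) / (2 * (E + d ^ 2 / 12)) = 1 / 2 by field_simp] at hkl
  rw [mul_div_right_comm π, log_mul (by positivity) (exp_ne_zero _), log_exp]
  calc _ = _ := by push_cast; ring
    _ ≤ _ := hkl

end OzarowWyner

section PAM

/-- The distance between neighbouring points of `PAM(N)`, with the junk value `0` for `N = 1`. -/
def pamSpacing (N : ℕ) : ℝ := √(12 / ((N : ℝ) ^ 2 - 1))

lemma pamLaw_eq_uniformLaw (N : ℕ) : pamLaw N = uniformLaw (pamPoint N) := by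
  simp [pamLaw, uniformLaw]

lemma three_le_sq_sub_one {N : ℕ} (hN : 2 ≤ N) : (3 : ℝ) ≤ (N : ℝ) ^ 2 - 1 := by
  have : (2 : ℝ) ≤ N := by exact_mod_cast hN
  nlinarith

lemma pamSpacing_pos {N : ℕ} (hN : 2 ≤ N) : 0 < pamSpacing N :=
  sqrt_pos.2 (div_pos (by norm_num) (by linarith [three_le_sq_sub_one hN]))

lemma sq_pamSpacing {N : ℕ} (hN : 2 ≤ N) : pamSpacing N ^ 2 = 12 / ((N : ℝ) ^ 2 - 1) :=
  sq_sqrt (div_nonneg (by norm_num) (by linarith [three_le_sq_sub_one hN]))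

lemma pamPoint_sub_pamPoint {N : ℕ} (j k : Fin N) :
    pamPoint N j - pamPoint N k = pamSpacing N * ((j : ℝ) - k) := by
  simp only [pamPoint, pamSpacing]
  ring

lemma pairwise_pamSpacing_le_abs_sub (N : ℕ) :
    Pairwise fun j k => pamSpacing N ≤ |pamPoint N j - pamPoint N k| := by
  intro j k hjk
  have hone : (1 : ℝ) ≤ |(j : ℝ) - k| := by
    have : (1 : ℤ) ≤ |(j : ℤ) - k| := Int.one_le_abs (by omega)
    exact_mod_cast this
  rw [pamPoint_sub_pamPoint, abs_mul]
  calc pamSpacing N ≤ |pamSpacing N| := le_abs_self _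
    _ ≤ |pamSpacing N| * |(j : ℝ) - k| := le_mul_of_one_le_right (abs_nonneg _) hone

lemma sum_range_sq_sub (n : ℕ) (c : ℝ) :
    ∑ k ∈ Finset.range n, ((k : ℝ) - c) ^ 2 =
      n * (n - 1) * (2 * n - 1) / 6 - c * n * (n - 1) + n * c ^ 2 := by
  induction n with
  | zero => simp
  | succ n ih =>
    rw [Finset.sum_range_succ, ih]
    push_cast
    ring

lemma sum_sq_pamPoint (N : ℕ) :
    ∑ k, pamPoint N k ^ 2 = pamSpacing N ^ 2 * (N * ((N : ℝ) ^ 2 - 1) / 12) := by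
  change ∑ k : Fin N, (pamSpacing N * ((k : ℝ) - ((N : ℝ) - 1) / 2)) ^ 2 = _
  simp only [mul_pow]
  rw [← Finset.mul_sum,
    Fin.sum_univ_eq_sum_range (fun k : ℕ => ((k : ℝ) - ((N : ℝ) - 1) / 2) ^ 2) N, sum_range_sq_sub]
  ring

lemma integral_sq_pamLaw {N : ℕ} (hN : 2 ≤ N) : ∫ x, x ^ 2 ∂pamLaw N = 1 := by
  have := three_le_sq_sub_one hN
  rw [pamLaw_eq_uniformLaw, integral_uniformLaw, sum_sq_pamPoint, sq_pamSpacing hN,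
    Fintype.card_fin]
  field_simp

end PAM

section MutualInformation

variable {Ω : Type*} [MeasurableSpace Ω] {μ : Measure Ω} {X Z : Ω → ℝ}

lemma aemeasurable_obsS (hX : AEMeasurable X μ) (hZ : AEMeasurable Z μ) (s : ℝ) :
    AEMeasurable (obsS X Z s) μ :=
  (hX.const_mul _).add hZ

lemma integral_sq_sub_mul_obsS (hX : MemLp X 2 μ) (hZ : HasLaw Z (gaussianReal 0 1) μ)
    (hXZ : IndepFun X Z μ) (s a : ℝ) :
    ∫ ω, (X ω - a * obsS X Z s ω) ^ 2 ∂μ = (1 - a * √s) ^ 2 * ∫ ω, X ω ^ 2 ∂μ + a ^ 2 := by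
  have hZ2 : MemLp Z 2 μ := hZ.hasGaussianLaw.memLp_two
  have hEZ : ∫ ω, Z ω ∂μ = 0 := by rw [hZ.integral_eq, integral_id_gaussianReal]
  have hEZ2 : ∫ ω, Z ω ^ 2 ∂μ = 1 := by
    rw [← variance_of_integral_eq_zero hZ.aemeasurable hEZ, hZ.variance_eq,
      variance_id_gaussianReal, NNReal.coe_one]
  have hcross : ∫ ω, X ω * Z ω ∂μ = 0 := by
    rw [hXZ.integral_fun_mul_eq_mul_integral hX.1 hZ2.1, hEZ, mul_zero]
  have hsq : Integrable (fun ω => (1 - a * √s) ^ 2 * X ω ^ 2) μ := hX.integrable_sq.const_mul _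
  have hmul : Integrable (fun ω => 2 * (1 - a * √s) * a * (X ω * Z ω)) μ :=
    (hX.integrable_mul hZ2).const_mul _
  have hdiff : Integrable
      (fun ω => (1 - a * √s) ^ 2 * X ω ^ 2 - 2 * (1 - a * √s) * a * (X ω * Z ω)) μ := hsq.sub hmul
  have hsqZ : Integrable (fun ω => a ^ 2 * Z ω ^ 2) μ := hZ2.integrable_sq.const_mul _
  calc ∫ ω, (X ω - a * obsS X Z s ω) ^ 2 ∂μ
      = ∫ ω, ((1 - a * √s) ^ 2 * X ω ^ 2 - 2 * (1 - a * √s) * a * (X ω * Z ω)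
          + a ^ 2 * Z ω ^ 2) ∂μ := by
        refine integral_congr_ae (ae_of_all _ fun ω => ?_)
        simp only [obsS]
        ring
    _ = _ := by
        rw [integral_add hdiff hsqZ, integral_sub hsq hmul, integral_const_mul,
          integral_const_mul, integral_const_mul, hcross, hEZ2]
        ring

lemma integral_sq_sub_lmmse (hX : MemLp X 2 μ) (hEX : ∫ ω, X ω ^ 2 ∂μ = 1)
    (hZ : HasLaw Z (gaussianReal 0 1) μ) (hXZ : IndepFun X Z μ) {s : ℝ} (hs : 0 ≤ s) :
    ∫ ω, (X ω - √s / (1 + s) * obsS X Z s ω) ^ 2 ∂μ = 1 / (1 + s) := by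
  rw [integral_sq_sub_mul_obsS hX hZ hXZ, hEX, div_mul_eq_mul_div, mul_self_sqrt hs, div_pow,
    sq_sqrt hs]
  field_simp
  ring

variable [IsProbabilityMeasure μ]

lemma ozarow_wyner_le_miS {N : ℕ} [NeZero N] (hX : HasLaw X (pamLaw N) μ)
    (hZ : HasLaw Z (gaussianReal 0 1) μ) (hXZ : IndepFun X Z μ) {s : ℝ} (hs : 0 ≤ s) :
    log N - 1 / 2 * log (1 + ((N : ℝ) ^ 2 - 1) / (1 + s)) - 1 / 2 * log (π * exp 1 / 6) ≤
      miS μ X Z s := by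
  have hXunif : HasLaw X (uniformLaw (pamPoint N)) μ := pamLaw_eq_uniformLaw N ▸ hX
  have hX2 := memLp_two_of_hasLaw_uniformLaw hXunif
  have hZ2 : MemLp Z 2 μ := hZ.hasGaussianLaw.memLp_two
  have hY := aemeasurable_obsS hX.aemeasurable hZ.aemeasurable s
  have hEX : ∫ ω, X ω ^ 2 ∂μ = ∫ x, x ^ 2 ∂pamLaw N :=
    hX.integral_comp (f := fun x => x ^ 2) (by fun_prop)
  obtain hN | hN : 2 ≤ N ∨ N = 1 := by have := NeZero.pos N; omega
  · have hmse := integral_sq_sub_lmmse hX2 (hEX.trans (integral_sq_pamLaw hN)) hZ hXZ hs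
    have hint : Integrable (fun ω => (X ω - √s / (1 + s) * obsS X Z s ω) ^ 2) μ :=
      (hX2.sub (((hX2.const_mul _).add hZ2).const_mul _)).integrable_sq
    have how := ozarow_wyner_le_klDivR (pamSpacing_pos hN) (pairwise_pamSpacing_le_abs_sub N)
      hXunif hY (measurable_const_mul _) hint
    have h3 := three_le_sq_sub_one hN
    rwa [hmse, sq_pamSpacing hN, Fintype.card_fin,
      show 12 * (1 / (1 + s)) / (12 / ((N : ℝ) ^ 2 - 1)) = ((N : ℝ) ^ 2 - 1) / (1 + s) by
        field_simp] at how
  · subst hN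
    have how := ozarow_wyner_le_klDivR one_pos Subsingleton.pairwise hXunif hY (g := 0)
      measurable_zero (by simpa using hX2.integrable_sq)
    have hzero : ∫ ω, X ω ^ 2 ∂μ = 0 := by
      rw [hEX, pamLaw_eq_uniformLaw, integral_uniformLaw]
      simp [pamPoint]
    simpa [hzero, miS] using how

lemma half_log_sub_miS_le {N : ℕ} [NeZero N] (hX : HasLaw X (pamLaw N) μ)
    (hZ : HasLaw Z (gaussianReal 0 1) μ) (hXZ : IndepFun X Z μ) {s c : ℝ} (hs : 0 ≤ s)
    (hc : 0 ≤ c) (hsN : s ≤ 4 * (N : ℝ) ^ 2 * c) :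
    1 / 2 * log (1 + s) - miS μ X Z s ≤ 1 / 2 * log (1 + c) + 1 / 2 * log (4 * π * exp 1 / 6) := by
  have hN : (1 : ℝ) ≤ N := by exact_mod_cast NeZero.pos N
  have hfrac : 0 ≤ ((N : ℝ) ^ 2 - 1) / (1 + s) := div_nonneg (by nlinarith) (by linarith)
  have hprod : (1 + s) * (1 + ((N : ℝ) ^ 2 - 1) / (1 + s)) ≤ (1 + c) * (4 * (N : ℝ) ^ 2) := by
    rw [mul_add, mul_div_cancel₀ _ (by linarith)]
    nlinarith
  have hlog := log_le_log (by positivity) hprod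
  rw [log_mul (by positivity) (by positivity), log_mul (by positivity) (by positivity),
    log_mul (by norm_num) (by positivity), log_pow] at hlog
  rw [show 4 * π * exp 1 / 6 = 4 * (π * exp 1 / 6) by ring, log_mul (by norm_num) (by positivity)]
  push_cast at hlog
  linarith [ozarow_wyner_le_miS hX hZ hXZ hs]

end MutualInformation

section PosteriorMean

lemma sqrt_gaussianPDFReal_mul (a b : ℝ) (v : ℝ≥0) (y : ℝ) :
    √(gaussianPDFReal a v y * gaussianPDFReal b v y) =
      exp (-(a - b) ^ 2 / (8 * v)) * gaussianPDFReal ((a + b) / 2) v y := by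
  have hsq : gaussianPDFReal a v y * gaussianPDFReal b v y =
      (exp (-(a - b) ^ 2 / (8 * v)) * gaussianPDFReal ((a + b) / 2) v y) ^ 2 := by
    simp only [gaussianPDFReal]
    rw [mul_mul_mul_comm, ← exp_add, mul_left_comm, mul_pow, ← exp_add, ← exp_nat_mul, ← pow_two]
    congr 2
    push_cast
    ring
  rw [hsq, sqrt_sq (mul_nonneg (exp_nonneg _) (gaussianPDFReal_nonneg _ _ _))]

variable {ι : Type*} [Fintype ι]

lemma mul_sq_sub_centerMass_le {w : ι → ℝ} (hw : ∀ i, 0 < w i) (x : ι → ℝ) (k : ι) :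
    w k * (x k - Finset.univ.centerMass w x) ^ 2 ≤
      ∑ j, (x k - x j) ^ 2 / 2 * √(w k * w j) := by
  have hS : 0 < ∑ i, w i := Finset.sum_pos (fun i _ => hw i) ⟨k, Finset.mem_univ k⟩
  have hjensen : (x k - Finset.univ.centerMass w x) ^ 2 ≤
      Finset.univ.centerMass w fun j => (x k - x j) ^ 2 := by
    have hconvex : ConvexOn ℝ Set.univ fun z : ℝ => (x k - z) ^ 2 := by
      simpa only [Function.comp_def, neg_add_eq_sub, sub_sq_comm, Set.preimage_univ] using
        (even_two.convexOn_pow (𝕜 := ℝ)).translate_right (-x k)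
    exact hconvex.map_centerMass_le (fun i _ => (hw i).le) hS fun i _ => Set.mem_univ _
  refine (mul_le_mul_of_nonneg_left hjensen (hw k).le).trans ?_
  rw [Finset.centerMass, smul_eq_mul, Finset.mul_sum, Finset.mul_sum]
  refine Finset.sum_le_sum fun j _ => ?_
  obtain rfl | hkj := eq_or_ne k j
  · simp
  have hamgm : 2 * √(w k * w j) ≤ ∑ i, w i := by
    calc 2 * √(w k * w j) = 2 * √(w k) * √(w j) := by rw [sqrt_mul (hw k).le, mul_assoc]
      _ ≤ √(w k) ^ 2 + √(w j) ^ 2 := two_mul_le_add_sq _ _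
      _ = w k + w j := by rw [sq_sqrt (hw k).le, sq_sqrt (hw j).le]
      _ ≤ ∑ i, w i := Finset.add_le_sum (fun i _ => (hw i).le) (Finset.mem_univ k)
          (Finset.mem_univ j) hkj
  have hsq : √(w k * w j) * √(w k * w j) = w k * w j :=
    mul_self_sqrt (mul_pos (hw k) (hw j)).le
  calc w k * ((∑ i, w i)⁻¹ * (w j • (x k - x j) ^ 2))
      = (x k - x j) ^ 2 * (√(w k * w j) * (√(w k * w j) / ∑ i, w i)) := by
        rw [← mul_div_assoc, hsq, smul_eq_mul]
        ring
    _ ≤ (x k - x j) ^ 2 * (√(w k * w j) * (1 / 2)) := by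
        gcongr ?_ * (?_ * ?_)
        rw [div_le_div_iff₀ hS two_pos]
        linarith
    _ = (x k - x j) ^ 2 / 2 * √(w k * w j) := by ring

/-- The posterior mean of the value `x i`, for a uniformly random index `i`, given the observation
`y` of a Gaussian variable of mean `m i` and variance `v`. -/
def posteriorMean (x m : ι → ℝ) (v : ℝ≥0) (y : ℝ) : ℝ :=
  Finset.univ.centerMass (fun i => gaussianPDFReal (m i) v y) x

variable (x m : ι → ℝ) {v : ℝ≥0}

lemma measurable_posteriorMean (v : ℝ≥0) : Measurable (posteriorMean x m v) := by
  unfold posteriorMean Finset.centerMass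
  fun_prop

lemma norm_posteriorMean_le [Nonempty ι] (hv : v ≠ 0) (y : ℝ) : ‖posteriorMean x m v y‖ ≤ ‖x‖ := by
  have hmem : posteriorMean x m v y ∈ Metric.closedBall 0 ‖x‖ :=
    (convex_closedBall 0 _).centerMass_mem (fun i _ => gaussianPDFReal_nonneg _ _ _)
      (Finset.sum_pos (fun i _ => gaussianPDFReal_pos _ _ _ hv) Finset.univ_nonempty)
      fun i _ => by simpa using norm_le_pi_norm x i
  simpa using hmem

lemma integral_sq_sub_posteriorMean_le (hv : v ≠ 0) (k : ι) :
    ∫ y, (x k - posteriorMean x m v y) ^ 2 ∂gaussianReal (m k) v ≤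
      ∑ j, (x k - x j) ^ 2 / 2 * exp (-(m k - m j) ^ 2 / (8 * v)) := by
  have hint : ∀ j, Integrable fun y => (x k - x j) ^ 2 / 2 *
      (exp (-(m k - m j) ^ 2 / (8 * v)) * gaussianPDFReal ((m k + m j) / 2) v y) :=
    fun j => ((integrable_gaussianPDFReal _ _).const_mul _).const_mul _
  rw [integral_gaussianReal_eq_integral_smul hv]
  simp only [smul_eq_mul]
  calc ∫ y, gaussianPDFReal (m k) v y * (x k - posteriorMean x m v y) ^ 2
      ≤ ∫ y, ∑ j, (x k - x j) ^ 2 / 2 *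
          (exp (-(m k - m j) ^ 2 / (8 * v)) * gaussianPDFReal ((m k + m j) / 2) v y) := by
        refine integral_mono_of_nonneg
          (ae_of_all _ fun y => mul_nonneg (gaussianPDFReal_nonneg _ _ _) (sq_nonneg _))
          (integrable_finsetSum _ fun j _ => hint j) (ae_of_all _ fun y => ?_)
        simp only [← sqrt_gaussianPDFReal_mul]
        exact mul_sq_sub_centerMass_le (fun i => gaussianPDFReal_pos (m i) v y hv) x k
    _ = _ := by
        simp only [integral_finsetSum _ fun j _ => hint j, integral_const_mul,
          integral_gaussianPDFReal_eq_one _ hv, mul_one]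

end PosteriorMean

section PairwiseBound

lemma integral_const_add_gaussianReal (f : ℝ → ℝ) (c m : ℝ) (v : ℝ≥0) :
    ∫ z, f (c + z) ∂gaussianReal m v = ∫ y, f y ∂gaussianReal (m + c) v := by
  rw [← gaussianReal_map_const_add c, (measurableEmbedding_addLeft c).integral_map]

variable {Ω ι : Type*} [MeasurableSpace Ω] [Fintype ι] {μ : Measure Ω} [IsProbabilityMeasure μ]
  {p : ι → ℝ} {X Z : Ω → ℝ}

lemma integral_comp_of_hasLaw_uniformLaw {ν : Measure ℝ} (hX : HasLaw X (uniformLaw p) μ)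
    (hZ : HasLaw Z ν μ) (hXZ : IndepFun X Z μ) {H : ℝ × ℝ → ℝ} (hH : Measurable H)
    (hint : Integrable (fun ω => H (X ω, Z ω)) μ) :
    ∫ ω, H (X ω, Z ω) ∂μ = (Fintype.card ι : ℝ)⁻¹ * ∑ k, ∫ z, H (p k, z) ∂ν := by
  have hpair : HasLaw (fun ω => (X ω, Z ω)) ((uniformLaw p).prod ν) μ :=
    ⟨hX.aemeasurable.prodMk hZ.aemeasurable, by
      rw [hXZ.map_prod_eq_prod_map_map hX.aemeasurable hZ.aemeasurable, hX.map_eq, hZ.map_eq]⟩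
  have : IsProbabilityMeasure (uniformLaw p) :=
    hX.map_eq ▸ Measure.isProbabilityMeasure_map hX.aemeasurable
  have : IsProbabilityMeasure ν := hZ.map_eq ▸ Measure.isProbabilityMeasure_map hZ.aemeasurable
  have hHint : Integrable H ((uniformLaw p).prod ν) := by
    rwa [← hpair.map_eq, integrable_map_measure hH.aestronglyMeasurable hpair.aemeasurable]
  calc ∫ ω, H (X ω, Z ω) ∂μ = ∫ z, H z ∂(uniformLaw p).prod ν :=
        hpair.integral_comp hH.aestronglyMeasurable
    _ = _ := by rw [integral_prod _ hHint, integral_uniformLaw]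

variable [Nonempty ι]

lemma mmseS_le_sum_integral_sq_sub (hX : Measurable X) (hXlaw : HasLaw X (uniformLaw p) μ)
    (hZ : Measurable Z) (hZlaw : HasLaw Z (gaussianReal 0 1) μ) (hXZ : IndepFun X Z μ) (s : ℝ)
    {g : ℝ → ℝ} (hg : Measurable g) {C : ℝ} (hgC : ∀ y, ‖g y‖ ≤ C) :
    mmseS μ X Z s ≤
      (Fintype.card ι : ℝ)⁻¹ * ∑ k, ∫ y, (p k - g y) ^ 2 ∂gaussianReal (√s * p k) 1 := by
  have hY : Measurable (obsS X Z s) := (hX.const_mul _).add hZ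
  have hX2 := memLp_two_of_hasLaw_uniformLaw hXlaw
  have hg2 : MemLp (fun ω => g (obsS X Z s ω)) 2 μ :=
    .of_bound (hg.comp hY).aestronglyMeasurable C (ae_of_all _ fun ω => hgC _)
  calc mmseS μ X Z s
      ≤ ∫ ω, (X ω - g (√s * X ω + Z ω)) ^ 2 ∂μ := integral_sq_sub_condExp_le hY.comap_le hX2 hg2
          (hg.comp (comap_measurable (obsS X Z s))).stronglyMeasurable
    _ = (Fintype.card ι : ℝ)⁻¹ * ∑ k, ∫ z, (p k - g (√s * p k + z)) ^ 2 ∂gaussianReal 0 1 :=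
        integral_comp_of_hasLaw_uniformLaw hXlaw hZlaw hXZ
          (H := fun z => (z.1 - g (√s * z.1 + z.2)) ^ 2) (by fun_prop) (hX2.sub hg2).integrable_sq
    _ = _ := by
        congr! 2 with k
        rw [integral_const_add_gaussianReal (fun y => (p k - g y) ^ 2), zero_add]

lemma mmseS_le_sum_pairwise (hX : Measurable X) (hXlaw : HasLaw X (uniformLaw p) μ)
    (hZ : Measurable Z) (hZlaw : HasLaw Z (gaussianReal 0 1) μ) (hXZ : IndepFun X Z μ) {s : ℝ}
    (hs : 0 ≤ s) :
    mmseS μ X Z s ≤ (Fintype.card ι : ℝ)⁻¹ * ∑ k, ∑ j,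
      (p k - p j) ^ 2 / 2 * exp (-(s * (p k - p j) ^ 2 / 8)) := by
  have hg := measurable_posteriorMean p (fun k => √s * p k) 1
  have hgC := norm_posteriorMean_le p (fun k => √s * p k) one_ne_zero
  refine (mmseS_le_sum_integral_sq_sub hX hXlaw hZ hZlaw hXZ s hg hgC).trans ?_
  refine mul_le_mul_of_nonneg_left (Finset.sum_le_sum fun k _ => ?_) (by positivity)
  calc _ ≤ _ := integral_sq_sub_posteriorMean_le p (fun k => √s * p k) one_ne_zero k
    _ = _ := Finset.sum_congr rfl fun j _ => by
      rw [← mul_sub, mul_pow, sq_sqrt hs, NNReal.coe_one, mul_one, neg_div]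

end PairwiseBound

section GaussianTailSum

variable {q : ℝ}

lemma add_one_sq_mul_pow_le (hq0 : 0 ≤ q) (hq : q ≤ 1 / 12) (n : ℕ) :
    ((n + 1 : ℕ) : ℝ) ^ 2 * q ^ (n + 1) ^ 2 ≤ q * (1 / 3) ^ n := by
  have hpoly : ((n + 1 : ℕ) : ℝ) ^ 2 ≤ 4 ^ n := by
    have : (n + 1) ^ 2 ≤ 4 ^ n := by
      calc (n + 1) ^ 2 ≤ (2 ^ n) ^ 2 := Nat.pow_le_pow_left n.lt_two_pow_self 2
        _ = 4 ^ n := pow_right_comm 2 n 2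
    exact_mod_cast this
  have hpow : q ^ (n + 1) ^ 2 ≤ q * (1 / 12) ^ n := by
    calc q ^ (n + 1) ^ 2 ≤ q ^ (n + 1) :=
          pow_le_pow_of_le_one hq0 (by linarith) (Nat.le_self_pow two_ne_zero _)
      _ = q * q ^ n := pow_succ' q n
      _ ≤ q * (1 / 12) ^ n := by gcongr
  calc ((n + 1 : ℕ) : ℝ) ^ 2 * q ^ (n + 1) ^ 2 ≤ 4 ^ n * (q * (1 / 12) ^ n) := by gcongr
    _ = q * (4 * (1 / 12)) ^ n := by rw [mul_pow]; ring
    _ = q * (1 / 3) ^ n := by norm_num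

lemma sum_range_add_one_sq_mul_pow_le (hq0 : 0 ≤ q) (hq : q ≤ 1 / 12) (n : ℕ) :
    ∑ i ∈ Finset.range n, ((i + 1 : ℕ) : ℝ) ^ 2 * q ^ (i + 1) ^ 2 ≤ 3 / 2 * q := by
  have hgeom : ∑ i ∈ Finset.range n, (1 / 3 : ℝ) ^ i ≤ 3 / 2 := by
    calc ∑ i ∈ Finset.range n, (1 / 3 : ℝ) ^ i ≤ ∑' i, (1 / 3 : ℝ) ^ i :=
          (summable_geometric_of_lt_one (by norm_num) (by norm_num)).sum_le_tsum _
            fun i _ => by positivity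
      _ = 3 / 2 := by
          rw [tsum_geometric_of_lt_one (by norm_num) (by norm_num)]
          norm_num
  calc ∑ i ∈ Finset.range n, ((i + 1 : ℕ) : ℝ) ^ 2 * q ^ (i + 1) ^ 2
      ≤ ∑ i ∈ Finset.range n, q * (1 / 3) ^ i :=
        Finset.sum_le_sum fun i _ => add_one_sq_mul_pow_le hq0 hq i
    _ = (∑ i ∈ Finset.range n, (1 / 3) ^ i) * q := by rw [← Finset.mul_sum, mul_comm]
    _ ≤ 3 / 2 * q := by gcongr

lemma sum_natAbs_sub_le {f : ℕ → ℝ} {B : ℝ} (hf : f 0 = 0)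
    (hB : ∀ n, ∑ i ∈ Finset.range n, f (i + 1) ≤ B) {N : ℕ} (k : Fin N) :
    ∑ j : Fin N, f ((k : ℤ) - j).natAbs ≤ 2 * B := by
  obtain ⟨n, hn⟩ : ∃ n, N = (k : ℕ) + (n + 1) := ⟨N - (k + 1), by omega⟩
  have hleft : ∑ j ∈ Finset.range k, f ((k : ℤ) - j).natAbs =
      ∑ i ∈ Finset.range k, f (i + 1) := by
    rw [← Finset.sum_range_reflect]
    refine Finset.sum_congr rfl fun j hj => congrArg f ?_
    have := Finset.mem_range.1 hj
    omega
  have hright : ∑ j ∈ Finset.range (n + 1), f ((k : ℤ) - ((k + j : ℕ) : ℤ)).natAbs =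
      ∑ i ∈ Finset.range n, f (i + 1) := by
    have hdist (j : ℕ) : ((k : ℤ) - ((k + j : ℕ) : ℤ)).natAbs = j := by omega
    simp only [hdist, Finset.sum_range_succ', hf, add_zero]
  calc ∑ j : Fin N, f ((k : ℤ) - j).natAbs
      = ∑ j ∈ Finset.range ((k : ℕ) + (n + 1)), f ((k : ℤ) - j).natAbs := by
        rw [← hn]
        exact Fin.sum_univ_eq_sum_range (fun j : ℕ => f ((k : ℤ) - j).natAbs) N
    _ ≤ 2 * B := by
        rw [Finset.sum_range_add, hleft, hright]
        linarith [hB k, hB n]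

lemma sum_sq_sub_mul_pow_le (hq0 : 0 ≤ q) (hq : q ≤ 1 / 12) {N : ℕ} (k : Fin N) :
    ∑ j : Fin N, ((k : ℝ) - j) ^ 2 * q ^ ((k : ℤ) - j).natAbs ^ 2 ≤ 3 * q := by
  have hcast (j : Fin N) : ((k : ℝ) - j) ^ 2 = (((k : ℤ) - j).natAbs : ℝ) ^ 2 := by
    rw [Nat.cast_natAbs, Int.cast_abs, sq_abs]
    push_cast
    rfl
  simp only [hcast]
  linarith [sum_natAbs_sub_le (f := fun i => (i : ℝ) ^ 2 * q ^ i ^ 2) (by simp)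
    (sum_range_add_one_sq_mul_pow_le hq0 hq) k]

end GaussianTailSum

section PAMError

lemma sq_sub_pamPoint_mul_exp_le {N : ℕ} {s t : ℝ} (ht : t * ((N : ℝ) ^ 2 - 1) ≤ 3 / 2 * s)
    (k j : Fin N) :
    (pamPoint N k - pamPoint N j) ^ 2 / 2 *
        exp (-(s * (pamPoint N k - pamPoint N j) ^ 2 / 8)) ≤
      2 * (((k : ℝ) - j) ^ 2 * exp (-t) ^ ((k : ℤ) - j).natAbs ^ 2) := by
  obtain rfl | hkj := eq_or_ne k j
  · simp
  have hN : 2 ≤ N := by omega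
  have h3 := three_le_sq_sub_one hN
  have hspacing : pamSpacing N ^ 2 ≤ 4 := by
    rw [sq_pamSpacing hN, div_le_iff₀ (by linarith)]
    linarith
  have hexponent : t ≤ s * pamSpacing N ^ 2 / 8 := by
    rw [sq_pamSpacing hN, show s * (12 / ((N : ℝ) ^ 2 - 1)) / 8 = 3 / 2 * s / ((N : ℝ) ^ 2 - 1) by
      ring]
    exact (le_div_iff₀ (by linarith)).2 ht
  have hpow : exp (-t) ^ ((k : ℤ) - j).natAbs ^ 2 = exp (((k : ℝ) - j) ^ 2 * -t) := by
    rw [← exp_nat_mul]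
    push_cast [Nat.cast_natAbs, sq_abs]
    rfl
  have hpref := mul_le_mul_of_nonneg_right hspacing (sq_nonneg ((k : ℝ) - j))
  have hdecay := mul_le_mul_of_nonneg_right hexponent (sq_nonneg ((k : ℝ) - j))
  rw [hpow, pamPoint_sub_pamPoint, mul_pow, ← mul_assoc 2]
  exact mul_le_mul (by linarith) (exp_le_exp.2 (by linarith)) (exp_nonneg _) (by positivity)

variable {Ω : Type*} [MeasurableSpace Ω] {μ : Measure Ω} [IsProbabilityMeasure μ] {X Z : Ω → ℝ}

lemma mmseS_le_of_hasLaw_pamLaw {N : ℕ} [NeZero N] (hX : Measurable X)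
    (hXlaw : HasLaw X (pamLaw N) μ) (hZ : Measurable Z) (hZlaw : HasLaw Z (gaussianReal 0 1) μ)
    (hXZ : IndepFun X Z μ) {s t : ℝ} (hs : 0 ≤ s) (ht : t * ((N : ℝ) ^ 2 - 1) ≤ 3 / 2 * s)
    (hexp : exp (-t) ≤ 1 / 12) : mmseS μ X Z s ≤ 6 * exp (-t) := by
  calc mmseS μ X Z s
      ≤ (Fintype.card (Fin N) : ℝ)⁻¹ * ∑ k, ∑ j, (pamPoint N k - pamPoint N j) ^ 2 / 2 *
          exp (-(s * (pamPoint N k - pamPoint N j) ^ 2 / 8)) :=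
        mmseS_le_sum_pairwise hX (pamLaw_eq_uniformLaw N ▸ hXlaw) hZ hZlaw hXZ hs
    _ ≤ (Fintype.card (Fin N) : ℝ)⁻¹ * ∑ _k : Fin N, 2 * (3 * exp (-t)) := by
        gcongr with k
        calc ∑ j, (pamPoint N k - pamPoint N j) ^ 2 / 2 *
              exp (-(s * (pamPoint N k - pamPoint N j) ^ 2 / 8))
            ≤ ∑ j : Fin N, 2 * (((k : ℝ) - j) ^ 2 * exp (-t) ^ ((k : ℤ) - j).natAbs ^ 2) :=
              Finset.sum_le_sum fun j _ => sq_sub_pamPoint_mul_exp_le ht k j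
          _ ≤ 2 * (3 * exp (-t)) := by
              rw [← Finset.mul_sum]
              gcongr
              exact sum_sq_sub_mul_pow_le (exp_nonneg _) hexp k
    _ = 6 * exp (-t) := by
        have : (N : ℝ) ≠ 0 := NeZero.ne _
        rw [Finset.sum_const, Finset.card_univ, nsmul_eq_mul, Fintype.card_fin,
          inv_mul_cancel_left₀ this]
        ring

end PAMError

lemma sq_floor_sqrt_le {x : ℝ} (hx : 0 ≤ x) : (⌊√x⌋₊ : ℝ) ^ 2 ≤ x := by
  calc (⌊√x⌋₊ : ℝ) ^ 2 ≤ √x ^ 2 := by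
        gcongr
        exact Nat.floor_le (sqrt_nonneg x)
    _ = x := sq_sqrt hx

lemma one_le_floor_sqrt {x : ℝ} (hx : 1 ≤ x) : 1 ≤ ⌊√x⌋₊ :=
  (Nat.one_le_floor_iff _).2 (one_le_sqrt.2 hx)

lemma lt_four_mul_sq_floor_sqrt {x : ℝ} (hx : 1 ≤ x) : x < 4 * (⌊√x⌋₊ : ℝ) ^ 2 := by
  have hfloor : (1 : ℝ) ≤ ⌊√x⌋₊ := by exact_mod_cast one_le_floor_sqrt hx
  calc x = √x ^ 2 := (sq_sqrt (by linarith)).symm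
    _ < ((⌊√x⌋₊ : ℝ) + 1) ^ 2 := by
        gcongr
        exact Nat.lt_floor_add_one _
    _ ≤ (2 * (⌊√x⌋₊ : ℝ)) ^ 2 := by
        gcongr
        linarith
    _ = 4 * (⌊√x⌋₊ : ℝ) ^ 2 := by ring

theorem strong_interference_achievability_gap_general
    {Ω : Type*} [MeasurableSpace Ω] {μ : Measure Ω} [IsProbabilityMeasure μ] {X Z : Ω → ℝ}
    (hX : Measurable X) (hZ : Measurable Z) (hZlaw : HasLaw Z (gaussianReal 0 1) μ)
    (hXZ : IndepFun X Z μ) {snr snr0 ε : ℝ} (hsnr : 0 ≤ snr) (hle : snr ≤ snr0)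
    (hε0 : 0 < ε) (hε1 : ε ≤ 1) {N : ℕ} (hN : N = ⌊√(1 + 3 / (2 * log (12 / ε)) * snr)⌋₊)
    (hXlaw : HasLaw X (pamLaw N) μ) :
    mmseS μ X Z snr0 ≤ ε ∧
    1 / 2 * log (1 + snr) - miS μ X Z snr ≤
      1 / 2 * log (1 + 2 / 3 * log (12 / ε)) + 1 / 2 * log (4 * π * exp 1 / 6) := by
  set t := log (12 / ε)
  have ht : 0 < t := log_pos ((one_lt_div hε0).2 (by linarith))
  have hexp : exp (-t) = ε / 12 := by rw [exp_neg, exp_log (by positivity), inv_div]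
  have hradicand : 1 ≤ 1 + 3 / (2 * t) * snr := le_add_of_nonneg_right (by positivity)
  have hcancel : t * (3 / (2 * t) * snr) = 3 / 2 * snr := by field_simp
  have hsq_le : (N : ℝ) ^ 2 - 1 ≤ 3 / (2 * t) * snr := by
    linarith [hN ▸ sq_floor_sqrt_le (zero_le_one.trans hradicand)]
  have hle_sq : 3 / (2 * t) * snr ≤ 4 * (N : ℝ) ^ 2 := by
    linarith [hN ▸ lt_four_mul_sq_floor_sqrt hradicand]
  have hupper := mul_le_mul_of_nonneg_left hsq_le ht.le
  have hlower := mul_le_mul_of_nonneg_left hle_sq ht.le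
  have : NeZero N := .of_pos (hN ▸ one_le_floor_sqrt hradicand)
  constructor
  · have hmmse := mmseS_le_of_hasLaw_pamLaw hX hXlaw hZ hZlaw hXZ (hsnr.trans hle) (t := t)
      (by linarith) (by linarith)
    linarith
  · exact half_log_sub_miS_le hXlaw hZlaw hXZ hsnr (by positivity) (by linarith)

/-- **Proposition 8 (strong-interference achievability gap with a discrete input).**
For `1 ≤ snr ≤ snr0`, `β ∈ (0,1]`, the input `X_D ~ PAM(N)` with the stated `N`
satisfies the MMSE constraint and is within the stated gap of `½·log(1+snr)`. -/
theorem strong_interference_achievability_gap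
    {Ω : Type*} [MeasurableSpace Ω] (μ : Measure Ω) [IsProbabilityMeasure μ]
    (XD Z : Ω → ℝ) (hXD : Measurable XD) (hZ : Measurable Z)
    (hZlaw : Measure.map Z μ = gaussianReal 0 1)
    (hindep : IndepFun XD Z μ)
    (snr snr0 β : ℝ) (hsnr : 1 ≤ snr) (hle : snr ≤ snr0) (hβ0 : 0 < β) (hβ1 : β ≤ 1)
    (c2 : ℝ) (hc2 : c2 = 3 / (2 * Real.log (12 * (1 + β * snr0) / β)))
    (N : ℕ) (hN : N = ⌊Real.sqrt (1 + c2 * snr)⌋₊)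
    (hXDlaw : Measure.map XD μ = pamLaw N) :
    mmseS μ XD Z snr0 ≤ β / (1 + β * snr0) ∧
    (1 / 2) * Real.log (1 + snr) - miS μ XD Z snr ≤
      (1 / 2) * Real.log (1 + (2 / 3) * Real.log (12 * (1 + β * snr0) / β))
        + (1 / 2) * Real.log (4 * Real.pi * Real.exp 1 / 6) := by
  subst hc2
  rw [← div_div_eq_mul_div 12 β (1 + β * snr0)] at hN ⊢
  have hden : 1 ≤ 1 + β * snr0 := le_add_of_nonneg_right (mul_nonneg hβ0.le (by linarith))
  exact strong_interference_achievability_gap_general hXD hZ ⟨hZ.aemeasurable, hZlaw⟩ hindep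
    (by linarith) hle (by positivity) ((div_le_self hβ0.le hden).trans hβ1) hN
    ⟨hXD.aemeasurable, hXDlaw⟩

end
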